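/- In the Golub–Kahan bidiagonalization setup, for every k with 1 ≤ k ≤ n−1 there exists m_k with 0 < m_k < 1 such that (γ_k^{lsqr})² < ‖AᵀA − Q_{k+1}Q_{k+1}ᵀ(AᵀA)Q_kQ_kᵀ‖ ≤ √(1 + m_k (γ_{k−1}^{lsqr}/γ_k^{lsqr})²) · (γ_k^{lsqr})². -/

import Mathlib

open Matrix

/-- Spectral norm (largest singular value) of a real matrix. -/
noncomputable def specNorm {a b : ℕ} (M : Matrix (Fin a) (Fin b) ℝ) : ℝ :=
  ‖LinearMap.toContinuousLinearMap (Matrix.toEuclideanLin M)‖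

/-- The `j`-th largest singular value of a real matrix (`j ≥ 1`), characterized via the
Eckart–Young theorem as the minimal spectral-norm distance to matrices of rank `< j`;
it is `0` when `j` exceeds the smaller dimension. -/
noncomputable def singVal {a b : ℕ} (M : Matrix (Fin a) (Fin b) ℝ) (j : ℕ) : ℝ :=
  sInf {r : ℝ | ∃ D : Matrix (Fin a) (Fin b) ℝ, D.rank < j ∧ r = specNorm (M - D)}

/-- The matrix of the first `k` columns of `M`. -/
def colSub {a b : ℕ} (M : Matrix (Fin a) (Fin b) ℝ) (k : ℕ) (hk : k ≤ b) :
    Matrix (Fin a) (Fin k) ℝ :=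
  M.submatrix id fun j => ⟨j.1, lt_of_lt_of_le j.2 hk⟩

/-- The leading `r × c` submatrix of `M`. -/
def subUL {a b : ℕ} (M : Matrix (Fin a) (Fin b) ℝ) (r c : ℕ) (hr : r ≤ a) (hc : c ≤ b) :
    Matrix (Fin r) (Fin c) ℝ :=
  M.submatrix (fun i => ⟨i.1, lt_of_lt_of_le i.2 hr⟩) (fun j => ⟨j.1, lt_of_lt_of_le j.2 hc⟩)

section helpers
open scoped Matrix.Norms.L2Operator

lemma specNorm_eq {a b : ℕ} (M : Matrix (Fin a) (Fin b) ℝ) : specNorm M = ‖M‖ := by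
  rw [Matrix.l2_opNorm_def]; rfl

lemma specNorm_nonneg {a b : ℕ} (M : Matrix (Fin a) (Fin b) ℝ) : 0 ≤ specNorm M := by
  unfold specNorm; positivity

lemma specNorm_mul {a b c : ℕ} (M : Matrix (Fin a) (Fin b) ℝ) (N : Matrix (Fin b) (Fin c) ℝ) :
    specNorm (M * N) ≤ specNorm M * specNorm N := by
  simp only [specNorm_eq]; exact Matrix.l2_opNorm_mul M N

lemma specNorm_transpose {a b : ℕ} (M : Matrix (Fin a) (Fin b) ℝ) :
    specNorm Mᵀ = specNorm M := by
  simp only [specNorm_eq, ← Matrix.conjTranspose_eq_transpose_of_trivial]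
  exact Matrix.l2_opNorm_conjTranspose M

lemma norm_toLp_sq {a : ℕ} (x : Fin a → ℝ) : ‖WithLp.toLp 2 x‖ ^ 2 = x ⬝ᵥ x := by
  rw [EuclideanSpace.norm_sq_eq]; simp [dotProduct, pow_two]

lemma specNorm_bound {a b : ℕ} (M : Matrix (Fin a) (Fin b) ℝ) (x : Fin b → ℝ) :
    (M *ᵥ x) ⬝ᵥ (M *ᵥ x) ≤ specNorm M ^ 2 * (x ⬝ᵥ x) := by
  have h := (LinearMap.toContinuousLinearMap (Matrix.toEuclideanLin M)).le_opNorm (WithLp.toLp 2 x)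
  have h2 : (LinearMap.toContinuousLinearMap (Matrix.toEuclideanLin M)) (WithLp.toLp 2 x)
    = WithLp.toLp 2 (M *ᵥ x) := rfl
  rw [h2] at h
  rw [← norm_toLp_sq, ← norm_toLp_sq, ← mul_pow]
  exact pow_le_pow_left₀ (norm_nonneg _) h 2

lemma specNorm_le {a b : ℕ} (M : Matrix (Fin a) (Fin b) ℝ) (c : ℝ) (hc : 0 ≤ c)
    (h : ∀ x : Fin b → ℝ, (M *ᵥ x) ⬝ᵥ (M *ᵥ x) ≤ c ^ 2 * (x ⬝ᵥ x)) : specNorm M ≤ c := by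
  refine ContinuousLinearMap.opNorm_le_bound _ hc fun x => ?_
  have h1 := h x.ofLp
  rw [← norm_toLp_sq, ← norm_toLp_sq, ← mul_pow] at h1
  exact (sq_le_sq₀ (norm_nonneg _) (by positivity)).1 h1

lemma specNorm_attained {a b : ℕ} (hb : 0 < b) (M : Matrix (Fin a) (Fin b) ℝ) :
    ∃ x : Fin b → ℝ, x ⬝ᵥ x = 1 ∧ (M *ᵥ x) ⬝ᵥ (M *ᵥ x) = specNorm M ^ 2 := by
  have : Nonempty (Fin b) := ⟨⟨0, hb⟩⟩
  set f := LinearMap.toContinuousLinearMap (Matrix.toEuclideanLin M) with hf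
  obtain ⟨x, hx, hmax⟩ := (isCompact_sphere (0 : EuclideanSpace ℝ (Fin b)) 1).exists_isMaxOn
    (NormedSpace.sphere_nonempty.2 zero_le_one) (f := fun x => ‖f x‖) (by fun_prop)
  have hx1 : ‖x‖ = 1 := by simpa using hx
  refine ⟨x.ofLp, by rw [← norm_toLp_sq]; simp [hx1], ?_⟩
  have hle : specNorm M ≤ ‖f x‖ := by
    refine ContinuousLinearMap.opNorm_le_of_unit_norm (norm_nonneg _) fun z hz => ?_
    exact hmax (by simpa using hz)
  have hge : ‖f x‖ ≤ specNorm M := by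
    have := f.le_opNorm x
    rwa [hx1, mul_one] at this
  have h2 : f x = WithLp.toLp 2 (M *ᵥ x.ofLp) := rfl
  rw [← norm_toLp_sq, ← h2, le_antisymm hge hle]

lemma specNorm_ortho {a b : ℕ} (M : Matrix (Fin a) (Fin b) ℝ) (h : Mᵀ * M = 1) :
    specNorm M ≤ 1 := by
  refine specNorm_le M 1 zero_le_one fun x => ?_
  rw [Matrix.dotProduct_mulVec, Matrix.vecMul_mulVec, ← Matrix.dotProduct_mulVec, h]; simp

lemma specNorm_conj {a b c d : ℕ} (P : Matrix (Fin a) (Fin b) ℝ) (hP : Pᵀ * P = 1)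
    (Q : Matrix (Fin d) (Fin c) ℝ) (hQ : Qᵀ * Q = 1) (X : Matrix (Fin b) (Fin c) ℝ) :
    specNorm (P * X * Qᵀ) = specNorm X := by
  have key : ∀ {a b c d : ℕ} (U : Matrix (Fin a) (Fin b) ℝ) (X : Matrix (Fin b) (Fin c) ℝ)
      (V : Matrix (Fin c) (Fin d) ℝ), specNorm U ≤ 1 → specNorm V ≤ 1 →
      specNorm (U * X * V) ≤ specNorm X := by
    intro a b c d U X V hU hV
    have h1 := specNorm_mul (U * X) V
    have h2 := specNorm_mul U X
    nlinarith [specNorm_nonneg U, specNorm_nonneg V, specNorm_nonneg X, specNorm_nonneg (U * X)]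
  have hp := specNorm_ortho P hP
  have hq := specNorm_ortho Q hQ
  apply le_antisymm
  · exact key _ _ _ hp (by rwa [specNorm_transpose])
  · have : X = Pᵀ * (P * X * Qᵀ) * Q := by
      calc X = (Pᵀ * P) * X * (Qᵀ * Q) := by rw [hP, hQ]; simp
        _ = _ := by simp only [Matrix.mul_assoc]
    conv_lhs => rw [this]
    exact key _ _ _ (by rwa [specNorm_transpose]) hq

end helpers

/-- Projection onto coordinates with index at least `k`. -/
def tailProj (n k : ℕ) : Matrix (Fin n) (Fin n) ℝ :=
  Matrix.diagonal fun i => if k ≤ (i : ℕ) then 1 else 0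

lemma tailProj_mulVec (n k : ℕ) (x : Fin n → ℝ) (i : Fin n) :
    (tailProj n k *ᵥ x) i = if k ≤ (i : ℕ) then x i else 0 := by
  simp [tailProj, Matrix.mulVec_diagonal]

lemma tailProj_transpose (n k : ℕ) : (tailProj n k)ᵀ = tailProj n k := by
  simp [tailProj]

lemma colSub_proj {n : ℕ} (Q : Matrix (Fin n) (Fin n) ℝ) (hQ : Q * Qᵀ = 1) (k : ℕ) (hk : k ≤ n) :
    colSub Q k hk * (colSub Q k hk)ᵀ = Q * (1 - tailProj n k) * Qᵀ := by
  ext i j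
  have h : (1 - tailProj n k : Matrix (Fin n) (Fin n) ℝ) =
      Matrix.diagonal fun i : Fin n => if (i : ℕ) < k then 1 else 0 := by
    ext a b
    by_cases hab : a = b
    · subst hab
      by_cases h : k ≤ (a : ℕ)
      · simp [tailProj, h]
      · simp [tailProj, h, not_le.1 h]
    · simp [tailProj, hab]
  rw [h, Matrix.mul_apply, Matrix.mul_apply]
  simp only [Matrix.mul_diagonal, colSub, Matrix.submatrix_apply, Matrix.transpose_apply, id]
  simp only [mul_ite, mul_one, mul_zero, ite_mul, zero_mul]
  rw [← Finset.sum_filter]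
  refine Finset.sum_bij (fun (a : Fin k) _ => (⟨a.1, lt_of_lt_of_le a.2 hk⟩ : Fin n)) ?_ ?_ ?_ ?_
  · intro a _; simp
  · intro a _ b _ h; simpa [Fin.ext_iff] using h
  · intro b hb; exact ⟨⟨b.1, by simpa using hb⟩, Finset.mem_univ _, rfl⟩
  · intro a _; rfl

section core
variable {n : ℕ} {α β : Fin n → ℝ} {B : Matrix (Fin (n + 1)) (Fin n) ℝ}

lemma T_zero (hB : ∀ (i : Fin (n + 1)) (j : Fin n),
      B i j = if (i : ℕ) = (j : ℕ) then α j
        else if (i : ℕ) = (j : ℕ) + 1 then β j else 0)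
    (i j : Fin n) (h : (i : ℕ) + 1 < j) : (Bᵀ * B) i j = 0 := by
  rw [Matrix.mul_apply]
  refine Finset.sum_eq_zero fun l _ => ?_
  rw [Matrix.transpose_apply, hB, hB]
  split_ifs <;> first | omega | simp

lemma T_symm (i j : Fin n) : (Bᵀ * B) i j = (Bᵀ * B) j i := by
  simp only [Matrix.mul_apply, Matrix.transpose_apply, mul_comm]

lemma T_off (hB : ∀ (i : Fin (n + 1)) (j : Fin n),
      B i j = if (i : ℕ) = (j : ℕ) then α j
        else if (i : ℕ) = (j : ℕ) + 1 then β j else 0)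
    (i j : Fin n) (h : (i : ℕ) + 1 = j) : (Bᵀ * B) i j = β i * α j := by
  rw [Matrix.mul_apply, Finset.sum_eq_single j.castSucc]
  · rw [Matrix.transpose_apply, hB, hB]
    simp [← h]
  · intro l _ hl
    rw [Matrix.transpose_apply, hB, hB]
    have : (l : ℕ) ≠ j := fun h => hl (Fin.ext h)
    split_ifs <;> first | omega | simp
  · simp

lemma T_diag (hB : ∀ (i : Fin (n + 1)) (j : Fin n),
      B i j = if (i : ℕ) = (j : ℕ) then α j
        else if (i : ℕ) = (j : ℕ) + 1 then β j else 0)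
    (j : Fin n) : (Bᵀ * B) j j = α j ^ 2 + β j ^ 2 := by
  rw [Matrix.mul_apply, Finset.sum_eq_add j.castSucc j.succ]
  · simp only [Matrix.transpose_apply, hB]
    simp [pow_two]
  · simp [Fin.ext_iff]
  · intro l _ hl
    rw [Matrix.transpose_apply, hB]
    have h1 : (l : ℕ) ≠ j := fun h => hl.1 (Fin.ext h)
    have h2 : (l : ℕ) ≠ j + 1 := fun h => hl.2 (Fin.ext h)
    simp [h1, h2]
  · simp
  · simp

lemma no_eig (hα : ∀ i, 0 < α i) (hβ : ∀ i, 0 < β i)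
    (hB : ∀ (i : Fin (n + 1)) (j : Fin n),
      B i j = if (i : ℕ) = (j : ℕ) then α j
        else if (i : ℕ) = (j : ℕ) + 1 then β j else 0)
    (w : Fin n → ℝ) (c : ℝ) (hw : (Bᵀ * B) *ᵥ w = c • w)
    (h0 : ∀ i : Fin n, (i : ℕ) = 0 → w i = 0) : w = 0 := by
  have H : ∀ l : ℕ, ∀ i : Fin n, (i : ℕ) = l → w i = 0 := by
    intro l
    induction l using Nat.strong_induction_on with
    | _ l ih =>
      intro i hi
      rcases Nat.eq_zero_or_pos l with hl | hl
      · exact h0 i (by omega)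
      · have hj : l - 1 < n := by omega
        have hrow := congrFun hw ⟨l - 1, hj⟩
        have hz : w ⟨l - 1, hj⟩ = 0 := ih (l - 1) (by omega) _ rfl
        rw [Pi.smul_apply, hz, smul_zero, Matrix.mulVec, dotProduct,
          Finset.sum_eq_single i] at hrow
        · rw [T_off hB _ _ (by simp; omega)] at hrow
          have := mul_pos (hβ ⟨l - 1, hj⟩) (hα i)
          exact (mul_eq_zero.1 hrow).resolve_left this.ne'
        · intro j _ hji
          have hne : (j : ℕ) ≠ i := fun h => hji (Fin.ext h)
          rcases lt_or_gt_of_ne hne with h | h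
          · rw [ih j (by omega) j rfl, mul_zero]
          · rw [T_zero hB _ _ (by simp; omega), zero_mul]
        · simp
  ext i; exact H i i rfl

lemma gamma_gt (hB : ∀ (i : Fin (n + 1)) (j : Fin n),
      B i j = if (i : ℕ) = (j : ℕ) then α j
        else if (i : ℕ) = (j : ℕ) + 1 then β j else 0) (j : Fin n) (l : ℕ) (hl : l ≤ j) :
    α j ^ 2 + β j ^ 2 ≤ specNorm (B * tailProj n l) ^ 2 := by
  have h := specNorm_bound (B * tailProj n l) (Pi.single j 1)
  have h1 : tailProj n l *ᵥ (Pi.single j 1) = Pi.single j 1 := by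
    ext i
    rw [tailProj_mulVec]
    by_cases hij : i = j
    · subst hij; simp [hl]
    · simp [hij]
  rw [← Matrix.mulVec_mulVec, h1] at h
  rw [Matrix.dotProduct_mulVec, Matrix.vecMul_mulVec, ← Matrix.dotProduct_mulVec] at h
  simpa [T_diag hB] using h

lemma tail_split (l : ℕ) (y : Fin n → ℝ) :
    y ⬝ᵥ y = (tailProj n l *ᵥ y) ⬝ᵥ (tailProj n l *ᵥ y) +
      ∑ i : Fin n, if (i : ℕ) < l then y i ^ 2 else 0 := by
  simp only [dotProduct, tailProj_mulVec, ← Finset.sum_add_distrib]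
  refine Finset.sum_congr rfl fun i _ => ?_
  split_ifs <;> first | omega | ring

lemma gram_eq (l : ℕ) : tailProj n l * ((Bᵀ * B) * tailProj n l) =
    (B * tailProj n l)ᵀ * (B * tailProj n l) := by
  rw [Matrix.transpose_mul, tailProj_transpose]; simp only [Matrix.mul_assoc]

lemma gram_norm {a b : ℕ} (F : Matrix (Fin a) (Fin b) ℝ) :
    specNorm (Fᵀ * F) ≤ specNorm F ^ 2 := by
  have := specNorm_mul Fᵀ F
  rwa [specNorm_transpose, ← pow_two] at this

lemma upper (hB : ∀ (i : Fin (n + 1)) (j : Fin n),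
      B i j = if (i : ℕ) = (j : ℕ) then α j
        else if (i : ℕ) = (j : ℕ) + 1 then β j else 0) (i j : Fin n) (hij : (i : ℕ) + 1 = j) :
    specNorm ((Bᵀ * B) * tailProj n j) ≤
      Real.sqrt (specNorm (B * tailProj n j) ^ 4 + (β i * α j) ^ 2) := by
  refine specNorm_le _ _ (Real.sqrt_nonneg _) fun x => ?_
  rw [Real.sq_sqrt (by positivity), tail_split (j : ℕ), Matrix.mulVec_mulVec, gram_eq, add_mul]
  refine add_le_add ?_ ?_
  · refine (specNorm_bound _ x).trans ?_
    have h := gram_norm (B * tailProj n j)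
    have h2 : specNorm ((B * tailProj n j)ᵀ * (B * tailProj n j)) ^ 2 ≤
        specNorm (B * tailProj n j) ^ 4 := by
      calc _ ≤ (specNorm (B * tailProj n j) ^ 2) ^ 2 :=
            pow_le_pow_left₀ (specNorm_nonneg _) h 2
        _ = _ := by ring
    refine mul_le_mul_of_nonneg_right h2 ?_
    rw [← norm_toLp_sq]; positivity
  · have hent : ∀ r : Fin n, (r : ℕ) < j → (((Bᵀ * B) * tailProj n j) *ᵥ x) r =
        if r = i then β i * α j * x j else 0 := by
      intro r hr
      rw [← Matrix.mulVec_mulVec, Matrix.mulVec, dotProduct]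
      simp only [tailProj_mulVec]
      split_ifs with hri
      · subst hri
        rw [Finset.sum_eq_single j]
        · rw [T_off hB _ _ hij]; simp
        · intro s _ hs
          have : (s : ℕ) ≠ j := fun h => hs (Fin.ext h)
          split_ifs
          · rw [T_zero hB _ _ (by omega), zero_mul]
          · simp
        · simp
      · refine Finset.sum_eq_zero fun s _ => ?_
        have : (r : ℕ) ≠ i := fun h => hri (Fin.ext h)
        split_ifs
        · rw [T_zero hB _ _ (by omega), zero_mul]
        · simp
    rw [Finset.sum_eq_single i]
    · rw [if_pos (by omega), hent i (by omega), if_pos rfl, mul_pow]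
      refine mul_le_mul_of_nonneg_left ?_ (sq_nonneg _)
      rw [pow_two, dotProduct]
      exact Finset.single_le_sum (f := fun i => x i * x i)
        (fun i _ => mul_self_nonneg _) (Finset.mem_univ j)
    · intro r _ hr
      split_ifs with h
      · rw [hent r h, if_neg hr]; simp
      · rfl
    · simp

lemma gram_attain {a b : ℕ} (F : Matrix (Fin a) (Fin b) ℝ) (v : Fin b → ℝ)
    (hv : v ⬝ᵥ v = 1) (h : (F *ᵥ v) ⬝ᵥ (F *ᵥ v) = specNorm F ^ 2) :
    (Fᵀ * F) *ᵥ v = specNorm F ^ 2 • v := by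
  set g := specNorm F ^ 2 with hg
  have h1 := specNorm_bound (Fᵀ * F) v
  have h2 : v ⬝ᵥ ((Fᵀ * F) *ᵥ v) = g := by
    rw [← h, Matrix.dotProduct_mulVec (F *ᵥ v), Matrix.vecMul_mulVec, ← Matrix.dotProduct_mulVec]
  have h3 : specNorm (Fᵀ * F) ^ 2 ≤ g ^ 2 := pow_le_pow_left₀ (specNorm_nonneg _) (gram_norm F) 2
  rw [hv] at h1
  set u := (Fᵀ * F) *ᵥ v with hu
  have h4 : (u - g • v) ⬝ᵥ (u - g • v) ≤ 0 := by
    simp only [sub_dotProduct, dotProduct_sub, smul_dotProduct, dotProduct_smul, smul_eq_mul]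
    rw [dotProduct_comm u v, h2, hv]; nlinarith
  have h5 : (u - g • v) ⬝ᵥ (u - g • v) = 0 := le_antisymm h4 (by rw [← norm_toLp_sq]; positivity)
  exact sub_eq_zero.1 (dotProduct_self_eq_zero.1 h5)

lemma lower (hα : ∀ i, 0 < α i) (hβ : ∀ i, 0 < β i)
    (hB : ∀ (i : Fin (n + 1)) (j : Fin n),
      B i j = if (i : ℕ) = (j : ℕ) then α j
        else if (i : ℕ) = (j : ℕ) + 1 then β j else 0) (l : ℕ) (hl : 1 ≤ l) (hln : l < n) :
    specNorm (B * tailProj n l) ^ 2 < specNorm ((Bᵀ * B) * tailProj n l) := by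
  by_contra! hcon
  obtain ⟨v, hv, hatt⟩ := specNorm_attained (by omega : 0 < n) (B * tailProj n l)
  have hg := gamma_gt hB ⟨l, hln⟩ l le_rfl
  set g := specNorm (B * tailProj n l) ^ 2 with hgdef
  have hgpos : 0 < g := lt_of_lt_of_le
    (add_pos (pow_pos (hα _) 2) (pow_pos (hβ _) 2)) hg
  have he := gram_attain _ v hv hatt
  rw [← hgdef, ← gram_eq, ← Matrix.mulVec_mulVec] at he
  have hb := specNorm_bound ((Bᵀ * B) * tailProj n l) v
  have hsq : specNorm ((Bᵀ * B) * tailProj n l) ^ 2 ≤ g ^ 2 :=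
    pow_le_pow_left₀ (specNorm_nonneg _) hcon 2
  have hvz : ∀ i : Fin n, (i : ℕ) < l → v i = 0 := by
    intro i hi
    have := congrFun he i
    rw [tailProj_mulVec, if_neg (by omega), Pi.smul_apply, smul_eq_mul] at this
    exact (mul_eq_zero.1 this.symm).resolve_left hgpos.ne'
  have hDv : tailProj n l *ᵥ v = v := by
    ext i
    rw [tailProj_mulVec]
    split_ifs with h
    · rfl
    · exact (hvz i (by omega)).symm
  set y := ((Bᵀ * B) * tailProj n l) *ᵥ v with hy
  have hy2 : y = (Bᵀ * B) *ᵥ v := by rw [hy, ← Matrix.mulVec_mulVec, hDv]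
  rw [tail_split l y, he, hv] at hb
  simp only [smul_dotProduct, dotProduct_smul, smul_eq_mul, hv] at hb
  have hs : ∑ i : Fin n, (if (i : ℕ) < l then y i ^ 2 else 0) ≤ 0 := by nlinarith
  have hnn : ∀ i ∈ Finset.univ, (0:ℝ) ≤ (if ((i : Fin n) : ℕ) < l then y i ^ 2 else 0) := by
    intro i _; split_ifs <;> positivity
  have hs0 := (Finset.sum_eq_zero_iff_of_nonneg hnn).1 (le_antisymm hs (Finset.sum_nonneg hnn))
  have hyv : (Bᵀ * B) *ᵥ v = g • v := by
    rw [← hy2, ← he]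
    ext i
    rw [tailProj_mulVec]
    split_ifs with h
    · rfl
    · have := hs0 i (Finset.mem_univ _)
      rw [if_pos (by omega)] at this
      exact pow_eq_zero_iff (two_ne_zero) |>.1 this
  have := no_eig hα hβ hB v g hyv (fun i hi => hvz i (by omega))
  rw [this] at hv
  simp at hv

lemma T_tail (hB : ∀ (i : Fin (n + 1)) (j : Fin n),
      B i j = if (i : ℕ) = (j : ℕ) then α j
        else if (i : ℕ) = (j : ℕ) + 1 then β j else 0) (l : ℕ) :
    tailProj n (l + 1) * (Bᵀ * B) * (1 - tailProj n l) = 0 := by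
  ext i j
  rw [Matrix.mul_sub, Matrix.mul_one, Matrix.sub_apply]
  simp only [tailProj, Matrix.mul_diagonal, Matrix.diagonal_mul, Matrix.zero_apply]
  split_ifs <;> simp
  rw [T_symm, T_zero hB]; omega

end core

lemma final_real (N c d a b a' b' : ℝ) (n1 : 0 ≤ c) (n0 : 0 ≤ d) (ha : 0 < a) (hb : 0 < b)
    (ha' : 0 < a') (hb' : 0 < b') (hg1 : a ^ 2 + b ^ 2 ≤ c ^ 2) (hg0 : a' ^ 2 + b' ^ 2 ≤ d ^ 2)
    (hlo : c ^ 2 < N) (hup : N ≤ Real.sqrt (c ^ 4 + (b' * a) ^ 2)) :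
    ∃ mk : ℝ, 0 < mk ∧ mk < 1 ∧ c ^ 2 < N ∧ N ≤ Real.sqrt (1 + mk * (d / c) ^ 2) * c ^ 2 := by
  have hc2 : a ^ 2 < c ^ 2 := by nlinarith [pow_pos hb 2]
  have hd2 : b' ^ 2 < d ^ 2 := by nlinarith [pow_pos ha' 2]
  have hcp : 0 < c := ha.trans (lt_of_pow_lt_pow_left₀ 2 n1 hc2)
  have hdp : 0 < d := hb'.trans (lt_of_pow_lt_pow_left₀ 2 n0 hd2)
  refine ⟨(b' * a) ^ 2 / (d ^ 2 * c ^ 2), by positivity, ?_, hlo, ?_⟩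
  · rw [div_lt_one (by positivity), mul_pow]
    exact mul_lt_mul'' hd2 hc2 (by positivity) (by positivity)
  · refine hup.trans (le_of_eq ?_)
    rw [show c ^ 4 + (b' * a) ^ 2 =
      (1 + (b' * a) ^ 2 / (d ^ 2 * c ^ 2) * (d / c) ^ 2) * (c ^ 2) ^ 2 by field_simp]
    rw [Real.sqrt_mul (by positivity), Real.sqrt_sq (by positivity)]

/-- there exists `0 < m_k < 1` with `(γ_k^{lsqr})² <
‖AᵀA - Q_{k+1}Q_{k+1}ᵀ(AᵀA)Q_kQ_kᵀ‖ ≤ √(1 + m_k (γ_{k-1}^{lsqr}/γ_k^{lsqr})²)(γ_k^{lsqr})²`. -/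
theorem lsmr_rank_k_approx_error_bounds
    (m n : ℕ) (hn : 2 ≤ n) (hmn : n < m)
    (A : Matrix (Fin m) (Fin n) ℝ)
    (P : Matrix (Fin m) (Fin (n + 1)) ℝ) (hP : Pᵀ * P = 1)
    (Q : Matrix (Fin n) (Fin n) ℝ) (hQ : Qᵀ * Q = 1)
    (α : Fin n → ℝ) (hα : ∀ i, 0 < α i)
    (β : Fin n → ℝ) (hβ : ∀ i, 0 < β i)
    (B : Matrix (Fin (n + 1)) (Fin n) ℝ)
    (hB : ∀ (i : Fin (n + 1)) (j : Fin n),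
      B i j = if (i : ℕ) = (j : ℕ) then α j
        else if (i : ℕ) = (j : ℕ) + 1 then β j else 0)
    (hA : A = P * B * Qᵀ)
    (σ : Fin n → ℝ) (hσpos : ∀ i, 0 < σ i)
    (hσstrict : ∀ i j : Fin n, i < j → σ j < σ i)
    (hσ : ∀ i : Fin n, σ i = singVal A ((i : ℕ) + 1))
    (k : ℕ) (hk1 : 1 ≤ k) (hk2 : k ≤ n - 1) :
    ∃ mk : ℝ, 0 < mk ∧ mk < 1 ∧
      specNorm (A * (1 - colSub Q k (by omega) * (colSub Q k (by omega))ᵀ)) ^ 2 <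
        specNorm (Aᵀ * A -
          colSub Q (k + 1) (by omega) * (colSub Q (k + 1) (by omega))ᵀ * (Aᵀ * A) *
            (colSub Q k (by omega) * (colSub Q k (by omega))ᵀ)) ∧
      specNorm (Aᵀ * A -
          colSub Q (k + 1) (by omega) * (colSub Q (k + 1) (by omega))ᵀ * (Aᵀ * A) *
            (colSub Q k (by omega) * (colSub Q k (by omega))ᵀ)) ≤
        Real.sqrt (1 + mk *
            (specNorm (A * (1 - colSub Q (k - 1) (by omega) * (colSub Q (k - 1) (by omega))ᵀ)) /
              specNorm (A * (1 - colSub Q k (by omega) * (colSub Q k (by omega))ᵀ))) ^ 2) *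
          specNorm (A * (1 - colSub Q k (by omega) * (colSub Q k (by omega))ᵀ)) ^ 2 := by
  subst hA
  have hQ' : Q * Qᵀ = 1 := mul_eq_one_comm.1 hQ
  have hAQ : ∀ (l : ℕ) (hl : l ≤ n), specNorm (P * B * Qᵀ * (1 - colSub Q l hl * (colSub Q l hl)ᵀ))
      = specNorm (B * tailProj n l) := by
    intro l hl
    rw [colSub_proj Q hQ', ← specNorm_conj P hP Q hQ (B * tailProj n l)]
    congr 1
    have : (1 : Matrix (Fin n) (Fin n) ℝ) - Q * (1 - tailProj n l) * Qᵀ = Q * tailProj n l * Qᵀ := by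
      rw [Matrix.mul_sub, Matrix.sub_mul, Matrix.mul_one, hQ']; abel
    rw [this]
    calc P * B * Qᵀ * (Q * tailProj n l * Qᵀ) = P * B * (Qᵀ * Q) * tailProj n l * Qᵀ := by
          simp only [Matrix.mul_assoc]
      _ = _ := by rw [hQ]; simp only [Matrix.mul_assoc, Matrix.mul_one]
  have hM : specNorm ((P * B * Qᵀ)ᵀ * (P * B * Qᵀ) -
          colSub Q (k + 1) (by omega) * (colSub Q (k + 1) (by omega))ᵀ *
            ((P * B * Qᵀ)ᵀ * (P * B * Qᵀ)) *
            (colSub Q k (by omega) * (colSub Q k (by omega))ᵀ)) =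
      specNorm ((Bᵀ * B) * tailProj n k) := by
    rw [colSub_proj Q hQ', colSub_proj Q hQ', ← specNorm_conj Q hQ Q hQ ((Bᵀ * B) * tailProj n k)]
    congr 1
    have hT : (P * B * Qᵀ)ᵀ * (P * B * Qᵀ) = Q * (Bᵀ * B) * Qᵀ := by
      simp only [Matrix.transpose_mul, Matrix.transpose_transpose]
      calc Q * (Bᵀ * Pᵀ) * (P * B * Qᵀ) = Q * (Bᵀ * (Pᵀ * P) * B) * Qᵀ := by
            simp only [Matrix.mul_assoc]
        _ = _ := by rw [hP, Matrix.mul_one]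
    have hZ := T_tail hB k
    have hE : (1 - tailProj n (k + 1)) * (Bᵀ * B) * (1 - tailProj n k) =
        (Bᵀ * B) - (Bᵀ * B) * tailProj n k := by
      rw [Matrix.sub_mul, Matrix.sub_mul, hZ]; simp [Matrix.mul_sub]
    rw [hT]
    calc Q * (Bᵀ * B) * Qᵀ - Q * (1 - tailProj n (k + 1)) * Qᵀ * (Q * (Bᵀ * B) * Qᵀ) *
          (Q * (1 - tailProj n k) * Qᵀ)
        = Q * (Bᵀ * B) * Qᵀ - Q * ((1 - tailProj n (k + 1)) * (Qᵀ * Q) * (Bᵀ * B) * (Qᵀ * Q) *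
          (1 - tailProj n k)) * Qᵀ := by simp only [Matrix.mul_assoc]
      _ = _ := by
        rw [hQ, Matrix.mul_one, Matrix.mul_one, hE, Matrix.mul_sub, Matrix.sub_mul]; abel
  simp only [hAQ, hM]
  have hkn : k < n := by omega
  have hkn' : k - 1 < n := by omega
  have hup := upper hB ⟨k - 1, hkn'⟩ ⟨k, hkn⟩ (by simp; omega)
  have hlo := lower hα hβ hB k hk1 hkn
  have hg1 := gamma_gt hB ⟨k, hkn⟩ k le_rfl
  have hg0 := gamma_gt hB ⟨k - 1, hkn'⟩ (k - 1) le_rfl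
  have ha := hα ⟨k, hkn⟩
  have hb := hβ ⟨k, hkn⟩
  have ha' := hα ⟨k - 1, hkn'⟩
  have hb' := hβ ⟨k - 1, hkn'⟩
  exact final_real _ _ _ _ _ _ _ (specNorm_nonneg _) (specNorm_nonneg _) ha hb ha' hb' hg1 hg0 hlo hup
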